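/- arXiv:math/0009151 — 3 statements merged into one kernel-verified Lean document; each statement's English description precedes it below -/
import Mathlib

section
/- For every integer n ≥ 1 and every integer k, the maps w_n and t_{k(n+1),kn} ∘ w_n, both viewed as continuous maps from the annulus A into X̂, are homotopic rel ∂A; that is, there is a continuous H : A × [0,1] → X̂ with H(·,0) = w_n, H(·,1) = t_{k(n+1),kn} ∘ w_n, and H(a,t) = w_n(a) for all a ∈ ∂A and all t ∈ [0,1]. -/
/-!
Every twist rotates the circle fibres, so it suffices to lift the rotation angle of `t_{N,M}` along
`w_n` to a continuous real function vanishing on `∂A`: scaling that lift by `t ∈ [0,1]` gives the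
homotopy. The centreline of `w_n` crosses the twisting region left to right below the hole `n + 1`
times and right to left above it `n` times, so the total angle is `2π ((n + 1) M - n N)`, which is
`0` for `N = k (n + 1)` and `M = k n`.
-/

open Real Set

noncomputable section

/-- The solid region `X = [-1,1] × [-1,1] × S¹`. -/
def Xset : Set (ℝ × ℝ × Circle) := Icc (-1) 1 ×ˢ Icc (-1) 1 ×ˢ univ

/-- The middle solid torus `[-1/3,1/3] × [-1/3,1/3] × S¹`. -/
def midTorus : Set (ℝ × ℝ × Circle) := Icc (-(1/3)) (1/3) ×ˢ Icc (-(1/3)) (1/3) ×ˢ univ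

/-- `X̂ = X ∖ midTorus`. -/
def Xhat : Set (ℝ × ℝ × Circle) := Xset \ midTorus

/-- The annulus `A = [-1,1] × S¹`. -/
def Aset : Set (ℝ × Circle) := Icc (-1) 1 ×ˢ univ

/-- The boundary `∂A = {-1,1} × S¹`. -/
def bdryA : Set (ℝ × Circle) := ({-1, 1} : Set ℝ) ×ˢ univ

/-- The wrapping maps `w_n : A → X` (defined by the same formulas on all of `ℝ × S¹`). -/
noncomputable def w (n : ℕ) (p : ℝ × Circle) : ℝ × ℝ × Circle :=
  if n = 0 then (p.1, -(1/2), p.2)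
  else if p.1 ≤ -(1/3) then (3/2 * p.1 + 1/2, -(1/2), p.2)
  else if p.1 ≤ 1/3 then
    (-(1/2) * Real.sin (π * ((n : ℝ) * (3 * p.1 + 1) - 1)),
      1/2 * Real.cos (π * ((n : ℝ) * (3 * p.1 + 1) - 1)), p.2)
  else (3/2 * p.1 - 1/2, -(1/2), p.2)

/-- The Dehn-twist homeomorphisms `t_{n,m} : X̂ → X̂` (defined by the same formulas on all
of `ℝ × ℝ × S¹`). -/
noncomputable def tw (n m : ℤ) (p : ℝ × ℝ × Circle) : ℝ × ℝ × Circle :=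
  if 1/3 ≤ |p.1| then p
  else if 1/3 < p.2.1 then (p.1, p.2.1, Circle.exp (3 * (n : ℝ) * π * (p.1 + 1/3)) * p.2.2)
  else (p.1, p.2.1, Circle.exp (3 * (m : ℝ) * π * (p.1 + 1/3)) * p.2.2)

/-- The nearest-point retraction of the line onto the twisting interval `[-1/3, 1/3]`. -/
def clampThird (a : ℝ) : ℝ := projIcc (-(1 / 3) : ℝ) (1 / 3) (by norm_num) a

lemma continuous_clampThird : Continuous clampThird :=
  continuous_subtype_val.comp continuous_projIcc

lemma clampThird_of_le {a : ℝ} (h : a ≤ -(1 / 3)) : clampThird a = -(1 / 3) := by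
  rw [clampThird, projIcc_of_le_left _ h]

lemma clampThird_of_ge {a : ℝ} (h : 1 / 3 ≤ a) : clampThird a = 1 / 3 := by
  rw [clampThird, projIcc_of_right_le _ h]

lemma clampThird_of_mem {a : ℝ} (h : a ∈ Icc (-(1 / 3) : ℝ) (1 / 3)) : clampThird a = a := by
  rw [clampThird, projIcc_of_mem _ h]

/-- The angle by which a single positive Dehn twist rotates the fibres at horizontal coordinate
`a`, increasing from `0` to `2π` across `[-1/3, 1/3]` and constant outside. -/
def twistAngle (a : ℝ) : ℝ := 3 * π * (clampThird a + 1 / 3)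

lemma continuous_twistAngle : Continuous twistAngle := by
  have := continuous_clampThird
  unfold twistAngle
  fun_prop

lemma twistAngle_of_le {a : ℝ} (h : a ≤ -(1 / 3)) : twistAngle a = 0 := by
  rw [twistAngle, clampThird_of_le h]
  ring

lemma twistAngle_of_ge {a : ℝ} (h : 1 / 3 ≤ a) : twistAngle a = 2 * π := by
  rw [twistAngle, clampThird_of_ge h]
  ring

lemma exp_twistAngle_of_le_abs {a : ℝ} (h : 1 / 3 ≤ |a|) : Circle.exp (twistAngle a) = 1 := by
  rcases le_abs'.1 h with h | h
  · rw [twistAngle_of_le h, Circle.exp_zero]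
  · rw [twistAngle_of_ge h, Circle.exp_two_pi]

/-- Rotation of the circle coordinate by the angle `φ`. -/
def rotate (φ : ℝ) (p : ℝ × ℝ × Circle) : ℝ × ℝ × Circle :=
  (p.1, p.2.1, Circle.exp φ * p.2.2)

lemma rotate_zero (p : ℝ × ℝ × Circle) : rotate 0 p = p := by
  simp only [rotate, Circle.exp_zero, one_mul]

lemma continuous_rotate : Continuous fun q : ℝ × ℝ × ℝ × Circle => rotate q.1 q.2 := by
  unfold rotate
  fun_prop

lemma rotate_mem_Xhat {φ : ℝ} {p : ℝ × ℝ × Circle} : rotate φ p ∈ Xhat ↔ p ∈ Xhat := by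
  simp only [rotate, Xhat, Xset, midTorus, mem_sdiff, mem_prod, mem_univ]

lemma tw_eq_rotate (N M : ℤ) {p : ℝ × ℝ × Circle} (hp : p ∉ midTorus) :
    tw N M p = rotate ((if 0 < p.2.1 then N else M : ℤ) * twistAngle p.1) p := by
  -- At height `|y| ≤ 1/3` outside the hole both twists are trivial, so the switch between them
  -- can be placed at `y = 0`.
  by_cases hx : 1 / 3 ≤ |p.1|
  · rw [tw, if_pos hx, rotate, Circle.exp_intCast_mul, exp_twistAngle_of_le_abs hx, one_zpow,
      one_mul]
  have hmem : p.1 ∈ Icc (-(1 / 3) : ℝ) (1 / 3) := abs_le.1 (not_le.1 hx).le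
  have hy : 1 / 3 < p.2.1 ↔ 0 < p.2.1 := by
    refine ⟨fun h => by linarith, fun h => ?_⟩
    by_contra! hle
    exact hp ⟨hmem, ⟨by linarith, hle⟩, trivial⟩
  have hangle (m : ℤ) : 3 * (m : ℝ) * π * (p.1 + 1 / 3) = m * twistAngle p.1 := by
    rw [twistAngle, clampThird_of_mem hmem]
    ring
  simp only [tw, if_neg hx, hy, hangle, rotate]
  split_ifs <;> rfl

lemma exp_arcsin_sin_of_cos_nonneg {s : ℝ} (h : 0 ≤ cos s) :
    Circle.exp (arcsin (sin s)) = Circle.exp s := by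
  have hcos : cos (arcsin (sin s)) = cos s := by
    rw [cos_arcsin, ← abs_cos_eq_sqrt_one_sub_sin_sq, abs_of_nonneg h]
  have hsin : sin (arcsin (sin s)) = sin s := sin_arcsin (neg_one_le_sin s) (sin_le_one s)
  ext
  rw [Circle.coe_exp, Circle.coe_exp, Complex.exp_mul_I, Complex.exp_mul_I, ← Complex.ofReal_cos,
    ← Complex.ofReal_sin, hcos, hsin, Complex.ofReal_cos, Complex.ofReal_sin]

lemma exp_arcsin_sin_of_cos_nonpos {s : ℝ} (h : cos s ≤ 0) :
    Circle.exp (arcsin (sin s)) = Circle.exp (π - s) := by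
  rw [← sin_pi_sub]
  exact exp_arcsin_sin_of_cos_nonneg (by rw [cos_pi_sub]; linarith)

/-- A continuous lift to `ℝ` of the rotation angle of `t_{1,0}` along the circle
`s ↦ (-(1/2) sin s, (1/2) cos s)`. The triangle wave `arcsin (sin s)` is `s` on the upper arcs and
`π - s` on the lower ones, up to multiples of `2π`, so the lift is constant on every lower arc and
drops by `2π` on every upper one. -/
def upperTwistLift (s : ℝ) : ℝ :=
  if cos s ≤ 0 then π - s - arcsin (sin s)
  else twistAngle (-(1 / 2) * sin s) + arcsin (sin s) - s

lemma continuous_upperTwistLift : Continuous upperTwistLift := by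
  have := continuous_twistAngle
  refine Continuous.if_le (by fun_prop) (by fun_prop) continuous_cos continuous_const
    fun s hs => ?_
  have hsin : sin s ^ 2 = 1 := by
    rw [sin_sq, hs]
    norm_num
  rcases sq_eq_one_iff.1 hsin with h | h
  · rw [h, twistAngle_of_le (by norm_num), arcsin_one]
    ring
  · rw [h, twistAngle_of_ge (by norm_num), arcsin_neg_one]
    ring

lemma exp_upperTwistLift_of_cos_nonpos {s : ℝ} (h : cos s ≤ 0) :
    Circle.exp (upperTwistLift s) = 1 := by
  rw [upperTwistLift, if_pos h, Circle.exp_sub, exp_arcsin_sin_of_cos_nonpos h, div_self']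

lemma exp_upperTwistLift_of_cos_pos {s : ℝ} (h : 0 < cos s) :
    Circle.exp (upperTwistLift s) = Circle.exp (twistAngle (-(1 / 2) * sin s)) := by
  rw [upperTwistLift, if_neg h.not_ge, Circle.exp_sub, Circle.exp_add,
    exp_arcsin_sin_of_cos_nonneg h.le, mul_div_cancel_right]

lemma upperTwistLift_neg_pi_add (n : ℕ) : upperTwistLift (-π + n * (2 * π)) = 2 * π * (1 - n) := by
  rw [upperTwistLift, cos_add_nat_mul_two_pi, sin_add_nat_mul_two_pi, cos_neg, cos_pi,
    if_pos (by norm_num), sin_neg, sin_pi, neg_zero, arcsin_zero]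
  ring

/-- The angular parameter of the circle that `w n` winds around, constant on each side of
`[-1/3, 1/3]`. -/
def wrapAngle (n : ℕ) (x : ℝ) : ℝ := π * (n * (3 * clampThird x + 1) - 1)

lemma continuous_wrapAngle (n : ℕ) : Continuous (wrapAngle n) := by
  have := continuous_clampThird
  unfold wrapAngle
  fun_prop

lemma wrapAngle_of_le (n : ℕ) {x : ℝ} (h : x ≤ -(1 / 3)) : wrapAngle n x = -π := by
  rw [wrapAngle, clampThird_of_le h]
  ring

lemma wrapAngle_of_ge (n : ℕ) {x : ℝ} (h : 1 / 3 ≤ x) : wrapAngle n x = -π + n * (2 * π) := by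
  rw [wrapAngle, clampThird_of_ge h]
  ring

lemma clampThird_of_cos_wrapAngle_pos {n : ℕ} {x : ℝ} (h : 0 < cos (wrapAngle n x)) :
    clampThird x = x := by
  refine clampThird_of_mem ⟨?_, ?_⟩ <;> by_contra! hx
  · rw [wrapAngle_of_le n hx.le, cos_neg, cos_pi] at h
    linarith
  · rw [wrapAngle_of_ge n hx.le, cos_add_nat_mul_two_pi, cos_neg, cos_pi] at h
    linarith

lemma w_eq {n : ℕ} (hn : n ≠ 0) (p : ℝ × Circle) :
    w n p = (-(1 / 2) * sin (wrapAngle n p.1) + 3 / 2 * (p.1 - clampThird p.1),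
      1 / 2 * cos (wrapAngle n p.1), p.2) := by
  rw [w, if_neg hn]
  split_ifs with hl hr
  · rw [wrapAngle_of_le n hl, clampThird_of_le hl, sin_neg, sin_pi, cos_neg, cos_pi]
    ring_nf
  · rw [wrapAngle, clampThird_of_mem ⟨(not_le.1 hl).le, hr⟩, sub_self, mul_zero, add_zero]
  · have hr := (not_le.1 hr).le
    rw [wrapAngle_of_ge n hr, clampThird_of_ge hr, sin_add_nat_mul_two_pi,
      cos_add_nat_mul_two_pi, sin_neg, sin_pi, cos_neg, cos_pi]
    ring_nf

lemma continuous_w {n : ℕ} (hn : n ≠ 0) : Continuous (w n) := by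
  have := continuous_wrapAngle n
  have := continuous_clampThird
  rw [funext (w_eq hn)]
  fun_prop

lemma mem_Xhat_of_eq_neg_half {a : ℝ} (ha : a ∈ Icc (-1 : ℝ) 1) (z : Circle) :
    (a, -(1 / 2), z) ∈ Xhat := by
  refine ⟨⟨ha, by norm_num, trivial⟩, ?_⟩
  rintro ⟨-, ⟨hb, -⟩, -⟩
  norm_num at hb

lemma mem_Xhat_of_sq_add_sq {a b : ℝ} (h : a ^ 2 + b ^ 2 = 1 / 4) (z : Circle) :
    (a, b, z) ∈ Xhat := by
  refine ⟨⟨abs_le.1 (abs_le_one_iff_mul_self_le_one.2 (by nlinarith)),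
    abs_le.1 (abs_le_one_iff_mul_self_le_one.2 (by nlinarith)), trivial⟩, ?_⟩
  rintro ⟨⟨ha, ha'⟩, ⟨hb, hb'⟩, -⟩
  dsimp only at ha ha' hb hb'
  nlinarith

lemma w_mem_Xhat (n : ℕ) {p : ℝ × Circle} (hp : p ∈ Aset) : w n p ∈ Xhat := by
  obtain ⟨⟨hl, hr⟩, -⟩ := hp
  unfold w
  split_ifs
  · exact mem_Xhat_of_eq_neg_half ⟨hl, hr⟩ _
  · exact mem_Xhat_of_eq_neg_half ⟨by linarith, by linarith⟩ _
  · refine mem_Xhat_of_sq_add_sq ?_ _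
    linear_combination (1 / 4) * sin_sq_add_cos_sq (π * (n * (3 * p.1 + 1) - 1))
  · exact mem_Xhat_of_eq_neg_half ⟨by linarith, by linarith⟩ _

/-- A continuous lift to `ℝ` of the rotation angle of `t_{N,M}` along `w n`, based at `0` on the
left boundary circle. It comes from writing `t_{N,M}` as `M` full twists `t_{1,1}` and `N - M`
upper twists `t_{1,0}`. -/
def twistLift (n : ℕ) (N M : ℤ) (p : ℝ × Circle) : ℝ :=
  M * twistAngle (w n p).1 + (N - M : ℤ) * (upperTwistLift (wrapAngle n p.1) - 2 * π)

lemma continuous_twistLift {n : ℕ} (hn : n ≠ 0) (N M : ℤ) : Continuous (twistLift n N M) := by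
  have := continuous_w hn
  have := continuous_twistAngle
  have := continuous_upperTwistLift
  have := continuous_wrapAngle n
  unfold twistLift
  fun_prop

lemma exp_twistLift {n : ℕ} (hn : n ≠ 0) (N M : ℤ) (p : ℝ × Circle) :
    Circle.exp (twistLift n N M p) =
      Circle.exp ((if 0 < (w n p).2.1 then N else M : ℤ) * twistAngle (w n p).1) := by
  have hheight : 0 < (w n p).2.1 ↔ 0 < cos (wrapAngle n p.1) := by
    rw [w_eq hn]
    exact mul_pos_iff_of_pos_left one_half_pos
  rw [twistLift, Circle.exp_add, Circle.exp_intCast_mul, Circle.exp_intCast_mul,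
    Circle.exp_intCast_mul, Circle.exp_sub_two_pi]
  split_ifs with h <;> rw [hheight] at h
  · have hx : (w n p).1 = -(1 / 2) * sin (wrapAngle n p.1) := by
      rw [w_eq hn, clampThird_of_cos_wrapAngle_pos h, sub_self, mul_zero, add_zero]
    rw [exp_upperTwistLift_of_cos_pos h, ← hx, ← zpow_add, add_sub_cancel]
  · rw [exp_upperTwistLift_of_cos_nonpos (not_lt.1 h), one_zpow, mul_one]

lemma tw_w_eq_rotate {n : ℕ} (hn : n ≠ 0) (N M : ℤ) {p : ℝ × Circle} (hp : p ∈ Aset) :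
    tw N M (w n p) = rotate (twistLift n N M p) (w n p) := by
  rw [tw_eq_rotate N M (w_mem_Xhat n hp).2, rotate, rotate, exp_twistLift hn]

lemma twistLift_neg_one {n : ℕ} (hn : n ≠ 0) (N M : ℤ) (z : Circle) :
    twistLift n N M (-1, z) = 0 := by
  have hs : wrapAngle n (-1) = -π + (0 : ℕ) * (2 * π) := by
    rw [wrapAngle_of_le n (by norm_num), Nat.cast_zero, zero_mul, add_zero]
  have hx : (w n (-1, z)).1 = -1 := by
    norm_num [w, hn]
  rw [twistLift, hx, hs, upperTwistLift_neg_pi_add, twistAngle_of_le (by norm_num)]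
  push_cast
  ring

lemma twistLift_one {n : ℕ} (hn : n ≠ 0) (N M : ℤ) (z : Circle) :
    twistLift n N M (1, z) = 2 * π * ((n + 1) * M - n * N) := by
  have hx : (w n (1, z)).1 = 1 := by
    norm_num [w, hn]
  rw [twistLift, hx, wrapAngle_of_ge n (by norm_num), upperTwistLift_neg_pi_add,
    twistAngle_of_ge (by norm_num)]
  push_cast
  ring

lemma twistLift_eq_zero_of_mem_bdryA {n : ℕ} (hn : n ≠ 0) {N M : ℤ} (hNM : (n + 1) * M = n * N)
    {p : ℝ × Circle} (hp : p ∈ bdryA) : twistLift n N M p = 0 := by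
  obtain ⟨x, z⟩ := p
  obtain ⟨rfl | rfl, -⟩ := hp
  · exact twistLift_neg_one hn N M z
  · have hNM' : ((n : ℝ) + 1) * M = n * N := mod_cast hNM
    rw [twistLift_one hn, hNM', sub_self, mul_zero]

/-- Lemma 3.1 of the paper: for every `n ≥ 1` and every integer `k`, the maps `w_n` and
`t_{k(n+1),kn} ∘ w_n`, viewed as maps of the annulus `A` into `X̂`, are homotopic rel `∂A`. -/
theorem stmt2 (n : ℕ) (hn : 1 ≤ n) (k : ℤ) :
    ∃ H : (ℝ × Circle) × ℝ → ℝ × ℝ × Circle,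
      ContinuousOn H (Aset ×ˢ Icc (0:ℝ) 1) ∧
      (∀ q ∈ Aset ×ˢ Icc (0:ℝ) 1, H q ∈ Xhat) ∧
      (∀ p ∈ Aset, H (p, 0) = w n p) ∧
      (∀ p ∈ Aset, H (p, 1) = tw (k * ((n : ℤ) + 1)) (k * (n : ℤ)) (w n p)) ∧
      (∀ p ∈ bdryA, ∀ t ∈ Icc (0:ℝ) 1, H (p, t) = w n p) := by
  have hn₀ : n ≠ 0 := Nat.one_le_iff_ne_zero.1 hn
  set N : ℤ := k * (n + 1) with hN
  set M : ℤ := k * n with hM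
  have hNM : (n + 1) * M = n * N := by
    rw [hN, hM]
    ring
  refine ⟨fun q => rotate (q.2 * twistLift n N M q.1) (w n q.1), ?_, fun q hq => ?_,
    fun p _ => ?_, fun p hp => ?_, fun p hp t _ => ?_⟩
  · have := continuous_w hn₀
    have := continuous_twistLift hn₀ N M
    exact (continuous_rotate.comp (by fun_prop : Continuous fun q : (ℝ × Circle) × ℝ =>
      (q.2 * twistLift n N M q.1, w n q.1))).continuousOn
  · exact rotate_mem_Xhat.2 (w_mem_Xhat n hq.1)
  · simp only [zero_mul, rotate_zero]
  · simp only [one_mul, tw_w_eq_rotate hn₀ N M hp]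
  · simp only [twistLift_eq_zero_of_mem_bdryA hn₀ hNM hp, mul_zero, rotate_zero]
end
end

section
/- Let n ≥ 1 and let P = {(x,θ) ∈ A : the first coordinate of w_n(x,θ) lies in [−1/3,1/3]}. Then there exist real numbers −1 ≤ a_0 < b_0 < a_1 < b_1 < ⋯ < a_{2n} < b_{2n} ≤ 1 such that P = ⋃_{j=0}^{2n} [a_j,b_j] × S¹; moreover, for every even j the second coordinate of w_n is ≤ −1/3 at every point of [a_j,b_j] × S¹ (giving n+1 sub-annuli mapping into the lower half of the middle third of X̂), and for every odd j the second coordinate of w_n is ≥ 1/3 at every point of [a_j,b_j] × S¹ (giving n sub-annuli mapping into the upper half). -/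
open Real Set

noncomputable section

/-!
Write `c` for the projection of a real number `s` to `[0, 2nπ]` and `α = arcsin (2/3)`. In a
suitable piecewise affine coordinate `s` on the first factor of the annulus,
`w n (s, θ) = (sin c / 2 + (s - c) / (3α), -cos c / 2, θ)`: the half circles are traversed for
`s ∈ [0, 2nπ]`, and the rate `1 / (3α)` at which the two straight ends are traversed is chosen so
that the first coordinate stays in `[-1/3, 1/3]` exactly up to distance `α` from `[0, 2nπ]`.
Hence the first coordinate lies in `[-1/3, 1/3]` iff `s` is within `α` of some `jπ` with
`0 ≤ j ≤ 2n`, and there `(-1) ^ j * cos c ≥ cos α = √5 / 3 ≥ 2/3`.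
-/

section Trigonometry

variable {x y : ℝ}

lemma abs_sin_le_iff_abs_le_arcsin (hx : |x| ≤ π / 2) : |sin x| ≤ y ↔ |x| ≤ arcsin y := by
  have hπ := pi_pos
  rw [abs_sin_eq_sin_abs_of_abs_le_pi (by linarith),
    le_arcsin_iff_sin_le' ⟨by linarith [abs_nonneg x], hx⟩]

lemma abs_sin_le_of_abs_sub_nat_mul_pi_le {j : ℕ} (h : |x - j * π| ≤ arcsin y) :
    |sin x| ≤ y := by
  have hsin : |sin (x - j * π)| = |sin x| := by simp [sin_sub_nat_mul_pi, abs_mul]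
  rwa [← hsin, abs_sin_le_iff_abs_le_arcsin (h.trans (arcsin_le_pi_div_two y))]

lemma abs_sub_round_div_mul_le {K : Type*} [Field K] [LinearOrder K] [IsStrictOrderedRing K]
    [FloorRing K] {a : K} (ha : 0 < a) (x : K) :
    |x - round (x / a) * a| ≤ a / 2 := by
  calc |x - round (x / a) * a| = |x / a - round (x / a)| * a := by
        rw [← abs_of_pos ha, ← abs_mul, abs_of_pos ha, sub_mul, div_mul_cancel₀ x ha.ne']
    _ ≤ 1 / 2 * a := by gcongr; exact abs_sub_round _
    _ = a / 2 := by ring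

lemma abs_sin_le_iff_exists_nat {N : ℕ} (hx : x ∈ Icc 0 (N * π)) :
    |sin x| ≤ y ↔ ∃ j ≤ N, |x - j * π| ≤ arcsin y := by
  refine ⟨fun h ↦ ?_, fun ⟨_, _, h⟩ ↦ abs_sin_le_of_abs_sub_nat_mul_pi_le h⟩
  have hround := abs_sub_round_div_mul_le pi_pos x
  have hnonneg : 0 ≤ round (x / π) := by
    rw [round_eq]
    exact Int.floor_nonneg.2 (add_nonneg (div_nonneg hx.1 pi_pos.le) one_half_pos.le)
  obtain ⟨j, hj⟩ := Int.eq_ofNat_of_zero_le hnonneg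
  rw [hj, Int.cast_natCast] at hround
  have hle : j ≤ N := by
    have hlt : (j : ℝ) * π < (N + 1 : ℕ) * π := by
      push_cast
      linarith [pi_pos, hx.2, (abs_le.1 hround).1]
    exact Nat.lt_succ_iff.1 (Nat.cast_lt.1 (lt_of_mul_lt_mul_right hlt pi_pos.le))
  refine ⟨j, hle, (abs_sin_le_iff_abs_le_arcsin hround).1 ?_⟩
  simpa [sin_sub_nat_mul_pi, abs_mul] using h

lemma sqrt_one_sub_sq_le_neg_one_pow_mul_cos {j : ℕ} (h : |x - j * π| ≤ arcsin y) :
    √(1 - y ^ 2) ≤ (-1) ^ j * cos x := by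
  rw [← cos_arcsin, ← cos_sub_nat_mul_pi, ← cos_abs (x - j * π)]
  have hπ := pi_pos
  exact cos_le_cos_of_nonneg_of_le_pi (abs_nonneg _) (by linarith [arcsin_le_pi_div_two y]) h

end Trigonometry

section Projection

open Filter

lemma abs_projIcc_sub_le {G : Type*} [AddCommGroup G] [LinearOrder G] [IsOrderedAddMonoid G]
    {l u : G} (h : l ≤ u) {x m : G} (hm : m ∈ Icc l u) :
    |projIcc l u h x - m| ≤ |x - m| := by
  simpa only [projIcc_of_mem h hm] using abs_projIcc_sub_projIcc h (c := x) (d := m)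

variable {l u : ℝ}

/-- The continuous piecewise affine map of `ℝ` with slope `a` on `[l, u]` and slope `b` outside,
sending `l` to `a * l`; it serves to change the speed of a parametrisation of a curve outside a
compact interval. -/
def stretch (h : l ≤ u) (a b x : ℝ) : ℝ :=
  a * projIcc l u h x + b * (x - projIcc l u h x)

lemma stretch_of_le_left (h : l ≤ u) (a b : ℝ) {x : ℝ} (hx : x ≤ l) :
    stretch h a b x = a * l + b * (x - l) := by
  rw [stretch, projIcc_of_le_left h hx]

lemma stretch_of_mem (h : l ≤ u) (a b : ℝ) {x : ℝ} (hx : x ∈ Icc l u) :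
    stretch h a b x = a * x := by
  rw [stretch, projIcc_of_mem h hx, sub_self, mul_zero, add_zero]

lemma stretch_of_right_le (h : l ≤ u) (a b : ℝ) {x : ℝ} (hx : u ≤ x) :
    stretch h a b x = a * u + b * (x - u) := by
  rw [stretch, projIcc_of_right_le h hx]

variable {a b : ℝ}

lemma strictMono_stretch (h : l ≤ u) (ha : 0 < a) (hb : 0 < b) : StrictMono (stretch h a b) := by
  intro x y hxy
  have hmono : (projIcc l u h x : ℝ) ≤ projIcc l u h y := monotone_projIcc h hxy.le
  have hlip : (projIcc l u h y : ℝ) - projIcc l u h x ≤ y - x := by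
    simpa only [abs_of_pos (sub_pos.2 hxy)] using
      (le_abs_self _).trans (abs_projIcc_sub_projIcc h (c := y) (d := x))
  unfold stretch
  rcases hmono.eq_or_lt with heq | hlt
  · rw [heq]
    gcongr
  · exact add_lt_add_of_lt_of_le (mul_lt_mul_of_pos_left hlt ha)
      (mul_le_mul_of_nonneg_left (by linarith) hb.le)

lemma surjective_stretch (h : l ≤ u) (a : ℝ) (hb : 0 < b) :
    Function.Surjective (stretch h a b) := by
  have hcont : Continuous (stretch h a b) := by
    have := continuous_projIcc (h := h)
    unfold stretch
    fun_prop
  refine hcont.surjective ?_ ?_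
  · have hlim : Tendsto (fun x ↦ a * u + b * (x - u)) atTop atTop :=
      tendsto_atTop_add_const_left _ _
        ((tendsto_atTop_add_const_right _ (-u) tendsto_id).const_mul_atTop hb)
    exact hlim.congr' ((eventually_ge_atTop u).mono fun x hx ↦ (stretch_of_right_le h a b hx).symm)
  · have hlim : Tendsto (fun x ↦ a * l + b * (x - l)) atBot atBot :=
      tendsto_atBot_add_const_left _ _
        ((tendsto_atBot_add_const_right _ (-l) tendsto_id).const_mul_atBot hb)
    exact hlim.congr' ((eventually_le_atBot l).mono fun x hx ↦ (stretch_of_le_left h a b hx).symm)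

end Projection

section Coil

/-- The angle through which a curve has turned at time `s` if it turns at unit speed during the
time interval `[0, N * π]`, making `N` half turns, and runs straight before and after. -/
def turn (N : ℕ) (s : ℝ) : ℝ := projIcc 0 (N * π) (by positivity) s

variable {N : ℕ} {s y : ℝ}

lemma turn_of_nonpos (hs : s ≤ 0) : turn N s = 0 := by
  rw [turn, projIcc_of_le_left _ hs]

lemma turn_of_mem (hs : s ∈ Icc 0 (N * π)) : turn N s = s := by
  rw [turn, projIcc_of_mem _ hs]

lemma turn_of_le (hs : N * π ≤ s) : turn N s = N * π := by
  rw [turn, projIcc_of_right_le _ hs]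

lemma natCast_mul_pi_mem_Icc {j : ℕ} (hj : j ≤ N) : j * π ∈ Icc 0 (N * π) :=
  ⟨by positivity, by gcongr⟩

lemma abs_turn_sub_le {j : ℕ} (hj : j ≤ N) : |turn N s - j * π| ≤ |s - j * π| :=
  abs_projIcc_sub_le _ (natCast_mul_pi_mem_Icc hj)

lemma sqrt_one_sub_sq_le_neg_one_pow_mul_cos_turn {j : ℕ} (hj : j ≤ N)
    (h : |s - j * π| ≤ arcsin y) : √(1 - y ^ 2) ≤ (-1) ^ j * cos (turn N s) :=
  sqrt_one_sub_sq_le_neg_one_pow_mul_cos ((abs_turn_sub_le hj).trans h)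

lemma abs_mul_div_arcsin_le_iff (hy : 0 < y) : |y * s / arcsin y| ≤ y ↔ |s| ≤ arcsin y := by
  have hα : 0 < arcsin y := arcsin_pos.2 hy
  rw [abs_div, abs_mul, abs_of_pos hy, abs_of_pos hα, div_le_iff₀ hα, mul_le_mul_iff_right₀ hy]

lemma abs_sin_turn_add_le_iff (hy : 0 < y) :
    |sin (turn N s) + y * (s - turn N s) / arcsin y| ≤ y ↔
      ∃ j ≤ N, |s - j * π| ≤ arcsin y := by
  rcases le_total s 0 with hs | hs
  · rw [turn_of_nonpos hs, sin_zero, zero_add, sub_zero, abs_mul_div_arcsin_le_iff hy]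
    refine ⟨fun h ↦ ⟨0, N.zero_le, by simpa using h⟩, fun ⟨j, _, h⟩ ↦ le_trans ?_ h⟩
    have : 0 ≤ j * π := by positivity
    rw [abs_of_nonpos hs, abs_of_nonpos (by linarith)]
    linarith
  rcases le_total s (N * π) with hs' | hs'
  · rw [turn_of_mem ⟨hs, hs'⟩, sub_self, mul_zero, zero_div, add_zero,
      abs_sin_le_iff_exists_nat ⟨hs, hs'⟩]
  · rw [turn_of_le hs', sin_nat_mul_pi, zero_add, abs_mul_div_arcsin_le_iff hy]
    refine ⟨fun h ↦ ⟨N, le_rfl, h⟩, fun ⟨j, hj, h⟩ ↦ le_trans ?_ h⟩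
    have := (natCast_mul_pi_mem_Icc hj).2
    rw [abs_of_nonneg (by linarith), abs_of_nonneg (by linarith)]
    linarith

end Coil

section WrappingMap

/-- The angle `α`, measured from the second coordinate axis, at which the circle of radius `1/2`
centred at the origin leaves the strip `[-1/3, 1/3] × ℝ`. -/
def crossAngle : ℝ := arcsin (2 / 3)

lemma crossAngle_pos : 0 < crossAngle := arcsin_pos.2 (by norm_num)

lemma crossAngle_lt_pi_div_two : crossAngle < π / 2 := arcsin_lt_pi_div_two.2 (by norm_num)

/-- The increasing reparametrisation of the first factor of the annulus in which the core of `w n`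
turns at unit speed along its half circles, which it traverses during `[0, 2nπ]`. The outer slope
makes the image of each straight end cover the distance `1/3` in time `crossAngle`. -/
def reparam (n : ℕ) (s : ℝ) : ℝ :=
  stretch (l := 0) (u := (2 * n : ℕ) * π) (by positivity)
    (1 / (3 * π * n)) (2 / (9 * crossAngle)) s - 1 / 3

variable {n : ℕ} {s : ℝ}

lemma reparam_of_nonpos (hs : s ≤ 0) : reparam n s = 2 / (9 * crossAngle) * s - 1 / 3 := by
  simp [reparam, stretch_of_le_left _ _ _ hs]

lemma reparam_of_mem (hs : s ∈ Icc 0 ((2 * n : ℕ) * π)) :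
    reparam n s = s / (3 * π * n) - 1 / 3 := by
  rw [reparam, stretch_of_mem _ _ _ hs]
  ring

lemma reparam_of_le (hn : n ≠ 0) (hs : (2 * n : ℕ) * π ≤ s) :
    reparam n s = 2 / (9 * crossAngle) * (s - (2 * n : ℕ) * π) + 1 / 3 := by
  have hπ := pi_ne_zero
  have hn' : (n : ℝ) ≠ 0 := Nat.cast_ne_zero.2 hn
  rw [reparam, stretch_of_right_le _ _ _ hs]
  push_cast
  field_simp
  ring

lemma strictMono_reparam (hn : n ≠ 0) : StrictMono (reparam n) := by
  have hα := crossAngle_pos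
  exact fun s t hst ↦
    sub_lt_sub_right (strictMono_stretch _ (by positivity) (by positivity) hst) _

lemma surjective_reparam (n : ℕ) : Function.Surjective (reparam n) := by
  have hα := crossAngle_pos
  intro x
  obtain ⟨s, hs⟩ := surjective_stretch (l := 0) (u := (2 * n : ℕ) * π) (by positivity)
    (1 / (3 * π * n)) (b := 2 / (9 * crossAngle)) (by positivity) (x + 1 / 3)
  exact ⟨s, by rw [reparam, hs, add_sub_cancel_right]⟩

lemma reparam_le_neg_one_third_iff (hn : n ≠ 0) : reparam n s ≤ -(1 / 3) ↔ s ≤ 0 := by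
  have h : reparam n 0 = -(1 / 3) := by simp [reparam_of_nonpos le_rfl]
  rw [← h, (strictMono_reparam hn).le_iff_le]

lemma reparam_le_one_third_iff (hn : n ≠ 0) : reparam n s ≤ 1 / 3 ↔ s ≤ (2 * n : ℕ) * π := by
  have h : reparam n ((2 * n : ℕ) * π) = 1 / 3 := by
    rw [reparam_of_le hn le_rfl, sub_self, mul_zero, zero_add]
  rw [← h, (strictMono_reparam hn).le_iff_le]

lemma reparam_mem_Icc_iff (hn : n ≠ 0) {j : ℕ} :
    reparam n s ∈ Icc (reparam n (j * π - crossAngle)) (reparam n (j * π + crossAngle)) ↔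
      |s - j * π| ≤ crossAngle := by
  rw [mem_Icc, (strictMono_reparam hn).le_iff_le, (strictMono_reparam hn).le_iff_le, abs_sub_le_iff]
  constructor <;> rintro ⟨h₁, h₂⟩ <;> constructor <;> linarith

lemma reparam_mem_Icc_neg_one_one (hn : n ≠ 0) {j : ℕ} (hj : j ≤ 2 * n)
    (h : |s - j * π| ≤ crossAngle) : reparam n s ∈ Icc (-1) 1 := by
  have hα := crossAngle_pos
  obtain ⟨h₁, h₂⟩ := abs_le.1 h
  obtain ⟨hj₁, hj₂⟩ := natCast_mul_pi_mem_Icc hj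
  constructor
  · calc (-1 : ℝ) ≤ reparam n (-crossAngle) := by
          rw [reparam_of_nonpos (by linarith)]
          field_simp
          linarith
      _ ≤ reparam n s := (strictMono_reparam hn).monotone (by linarith)
  · calc reparam n s ≤ reparam n ((2 * n : ℕ) * π + crossAngle) :=
          (strictMono_reparam hn).monotone (by linarith)
      _ ≤ 1 := by
          rw [reparam_of_le hn (by linarith)]
          field_simp
          linarith

lemma w_reparam (hn : n ≠ 0) (s : ℝ) (θ : Circle) :
    w n (reparam n s, θ) =
      (1 / 2 * (sin (turn (2 * n) s) + 2 / 3 * (s - turn (2 * n) s) / crossAngle),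
        -(1 / 2 * cos (turn (2 * n) s)), θ) := by
  simp only [w, if_neg hn, reparam_le_neg_one_third_iff hn, reparam_le_one_third_iff hn]
  split_ifs with h₀ h₁
  · rw [reparam_of_nonpos h₀, turn_of_nonpos h₀, sin_zero, cos_zero]
    congr 2 <;> ring
  · have hs : s ∈ Icc 0 ((2 * n : ℕ) * π) := ⟨(not_le.1 h₀).le, h₁⟩
    have hphase : π * (n * (3 * reparam n s + 1) - 1) = s - π := by
      rw [reparam_of_mem hs]
      field_simp
      ring
    rw [hphase, turn_of_mem hs, sin_sub_pi, cos_sub_pi]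
    simp
  · have hs : (2 * n : ℕ) * π ≤ s := (not_le.1 h₁).le
    rw [reparam_of_le hn hs, turn_of_le hs, sin_nat_mul_pi, cos_nat_mul_pi,
      (even_two_mul n).neg_one_pow]
    congr 2 <;> ring

lemma w_reparam_fst_mem_Icc_iff (hn : n ≠ 0) (s : ℝ) (θ : Circle) :
    (w n (reparam n s, θ)).1 ∈ Icc (-(1 / 3)) (1 / 3) ↔
      ∃ j ≤ 2 * n, |s - j * π| ≤ crossAngle := by
  rw [w_reparam hn, crossAngle, ← abs_sin_turn_add_le_iff (by norm_num), mem_Icc, abs_le]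
  constructor <;> rintro ⟨h₁, h₂⟩ <;> constructor <;> linarith

lemma one_third_le_neg_one_pow_mul_w_reparam_snd (hn : n ≠ 0) {j : ℕ} (hj : j ≤ 2 * n)
    (h : |s - j * π| ≤ crossAngle) (θ : Circle) :
    1 / 3 ≤ (-1) ^ (j + 1) * (w n (reparam n s, θ)).2.1 := by
  have hcos := sqrt_one_sub_sq_le_neg_one_pow_mul_cos_turn hj h
  have hsqrt : 2 / 3 ≤ √(1 - (2 / 3) ^ 2) := le_sqrt_of_sq_le (by norm_num)
  rw [w_reparam hn]
  simp only
  rw [pow_succ]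
  linarith

end WrappingMap

/-- The structural claim in the proof of Lemma 3.1: for `n ≥ 1`, the part of the annulus `A`
that `w_n` maps into the middle third of `X̂` (first coordinate in `[-1/3,1/3]`) is a union
of `2n+1` essential sub-annuli `[a_j,b_j] × S¹` of `A`, occurring in order; the `n+1`
even-indexed ones map into the lower half (`y ≤ -1/3`) and the `n` odd-indexed ones map
into the upper half (`y ≥ 1/3`). -/
theorem stmt3 (n : ℕ) (hn : 1 ≤ n) :
    ∃ a b : ℕ → ℝ,
      -1 ≤ a 0 ∧ b (2 * n) ≤ 1 ∧
      (∀ j ≤ 2 * n, a j < b j) ∧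
      (∀ j < 2 * n, b j < a (j + 1)) ∧
      ({p ∈ Aset | (w n p).1 ∈ Icc (-(1/3)) (1/3)} =
        ⋃ j ∈ Finset.range (2 * n + 1), Icc (a j) (b j) ×ˢ (univ : Set Circle)) ∧
      (∀ j ≤ 2 * n, Even j →
        ∀ p ∈ Icc (a j) (b j) ×ˢ (univ : Set Circle), (w n p).2.1 ≤ -(1/3)) ∧
      (∀ j ≤ 2 * n, Odd j →
        ∀ p ∈ Icc (a j) (b j) ×ˢ (univ : Set Circle), 1/3 ≤ (w n p).2.1) := by
  have hn₀ : n ≠ 0 := Nat.one_le_iff_ne_zero.1 hn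
  have hα := crossAngle_pos
  have hα' := crossAngle_lt_pi_div_two
  have hmono := strictMono_reparam hn₀
  refine ⟨fun j ↦ reparam n (j * π - crossAngle), fun j ↦ reparam n (j * π + crossAngle),
    ?_, ?_, fun j _ ↦ hmono (by linarith), fun j _ ↦ hmono ?_, ?_, ?_, ?_⟩
  · exact (reparam_mem_Icc_neg_one_one hn₀ (Nat.zero_le _) (by simp [abs_of_pos hα])).1
  · exact (reparam_mem_Icc_neg_one_one hn₀ le_rfl (by simp [abs_of_pos hα])).2
  · push_cast
    linarith
  · ext ⟨x, θ⟩
    obtain ⟨s, rfl⟩ := surjective_reparam n x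
    simp only [Aset, mem_ofPred_eq, mem_iUnion, Finset.mem_range, mem_prod, mem_univ, and_true,
      exists_prop, Nat.lt_succ_iff, w_reparam_fst_mem_Icc_iff hn₀, reparam_mem_Icc_iff hn₀]
    exact and_iff_right_of_imp fun ⟨j, hj, h⟩ ↦ reparam_mem_Icc_neg_one_one hn₀ hj h
  · rintro j hj heven ⟨x, θ⟩ ⟨hx, -⟩
    obtain ⟨s, rfl⟩ := surjective_reparam n x
    have h := one_third_le_neg_one_pow_mul_w_reparam_snd hn₀ hj ((reparam_mem_Icc_iff hn₀).1 hx) θ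
    rw [heven.add_one.neg_one_pow] at h
    linarith
  · rintro j hj hodd ⟨x, θ⟩ ⟨hx, -⟩
    obtain ⟨s, rfl⟩ := surjective_reparam n x
    have h := one_third_le_neg_one_pow_mul_w_reparam_snd hn₀ hj ((reparam_mem_Icc_iff hn₀).1 hx) θ
    rwa [hodd.add_one.neg_one_pow, one_mul] at h
end
end

section
/- Let d ≥ 1 and let M be a nonempty Hausdorff topological space equipped with a charted-space structure over the d-dimensional Euclidean half-space H^d = {x ∈ ℝ^d : x_d ≥ 0} (so every point of M has a chart which is a homeomorphism from an open neighborhood onto an open subset of H^d), with associated model with corners I (Mathlib's 𝓡∂ d), and let int M denote the manifold interior of M, namely the set of points x ∈ M whose image under the chart at x lies in the topological interior of the range of I. Then for every point x ∈ M and every neighborhood W of x there exists a neighborhood V of x with V ⊆ W such that V ∩ int M is nonempty and connected. -/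
open Set
open scoped Manifold

/-!
If `f` is a `C¹` map of a bounded convex open set `U` into its closure which is the identity on the
frontier, then `∫ x in U, det (1 + t • (Df x - 1))` is a polynomial in `t`. For small `t > 0` the
map `id + t • (f - id)` is a bijection of `U`, so the polynomial takes the constant value `vol U`,
and its value at `t = 1` shows `∫ x in U, det (Df x) = vol U`. A retraction of a ball onto its
sphere has singular derivative, so there is none; hence a continuous self-map of a
finite-dimensional space which is the identity near infinity is surjective, and Brouwer's fixed
point theorem follows.

By Brouwer, a small perturbation of the identity near `p` still takes the value `p`. Given a
transition map `τ` between charts and a chart point `p` interior to the model, perturb `τ` by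
pushing its values a little towards an interior point of the (convex) target model: by the previous
sentence `τ p` is still attained, and every pushed value is interior. So interiority does not depend
on the chart, and small chart balls meet the interior of the manifold in convex sets.
-/

open Filter Topology Metric MeasureTheory Module Polynomial

section Jacobian

theorem exists_polynomial_eval_eq_integral {X : Type*} [MeasurableSpace X] {μ : Measure X}
    {n : ℕ} {p : X → ℝ[X]} (hdeg : ∀ x, (p x).degree < n)
    (hint : ∀ t, Integrable (fun x ↦ (p x).eval t) μ) :
    ∃ q : ℝ[X], ∀ t, ∫ x, (p x).eval t ∂μ = q.eval t := by
  let v : Fin n → ℝ := fun i ↦ i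
  have hv : InjOn v (Finset.univ : Finset (Fin n)) :=
    (Nat.cast_injective.comp Fin.val_injective).injOn
  have heval (x : X) (t : ℝ) : (p x).eval t =
      ∑ i, (p x).eval (v i) * (Lagrange.basis Finset.univ v i).eval t := by
    conv_lhs => rw [Lagrange.eq_interpolate (f := p x) hv (by simpa using hdeg x)]
    simp only [Lagrange.interpolate_apply, eval_finsetSum, eval_mul, eval_C]
  refine ⟨Lagrange.interpolate Finset.univ v fun i ↦ ∫ x, (p x).eval (v i) ∂μ, fun t ↦ ?_⟩
  simp only [Lagrange.interpolate_apply, eval_finsetSum, eval_mul, eval_C]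
  simp_rw [heval _ t]
  rw [integral_finsetSum _ fun i _ ↦ (hint (v i)).mul_const _]
  simp_rw [integral_mul_const]

theorem exists_polynomial_eval_eq_det_add_smul {R V : Type*} [CommRing R] [Nontrivial R]
    [AddCommGroup V] [Module R V] [Module.Free R V] [Module.Finite R V] (A B : V →ₗ[R] V) :
    ∃ p : R[X], p.natDegree ≤ finrank R V ∧ ∀ t, p.eval t = LinearMap.det (B + t • A) := by
  let b := finBasis R V
  let N := LinearMap.toMatrix b b
  refine ⟨((X : R[X]) • (N A).map C + (N B).map C).det, ?_, fun t ↦ ?_⟩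
  · simpa only [Fintype.card_fin] using natDegree_det_X_add_C_le (N A) (N B)
  · rw [← LinearMap.det_toMatrix b, ← coe_evalRingHom, RingHom.map_det]
    congr 1
    ext i j
    simp only [RingHom.mapMatrix_apply, coe_evalRingHom, Matrix.map_apply, Matrix.add_apply,
      Matrix.smul_apply, smul_eq_mul, X_mul_C, eval_mul, eval_C, eval_X, map_add,
      map_smul, N]
    ring

theorem image_eq_self_of_isOpen_image {X : Type*} [TopologicalSpace X] [T2Space X] {F : X → X}
    {U : Set X} (hU : IsPreconnected U) (hcpt : IsCompact (closure U))
    (hF : ContinuousOn F (closure U)) (hopen : IsOpen (F '' U)) (hmaps : MapsTo F U U)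
    (hfr : MapsTo F (frontier U) Uᶜ) : F '' U = U := by
  rcases U.eq_empty_or_nonempty with rfl | hne
  · exact image_empty F
  refine hmaps.image_subset.antisymm <| hU.subset_of_closure_inter_subset hopen ?_ ?_
  · obtain ⟨x, hx⟩ := hne
    exact ⟨F x, hmaps hx, mem_image_of_mem F hx⟩
  · rintro y ⟨hy, hyU⟩
    obtain ⟨x, hx, rfl⟩ : y ∈ F '' closure U :=
      closure_minimal (image_mono subset_closure) (hcpt.image_of_continuousOn hF).isClosed hy
    rw [closure_eq_self_union_frontier] at hx
    exact mem_image_of_mem F (hx.resolve_right fun hxfr ↦ hfr hxfr hyU)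

variable {E : Type*} [NormedAddCommGroup E] [NormedSpace ℝ E]

theorem injOn_and_isOpen_image_id_add_of_lipschitzOnWith [CompleteSpace E] {h : E → E} {s : Set E}
    {K : NNReal} (hh : LipschitzOnWith K h s) (hK : K < 1) (hs : IsOpen s) :
    InjOn (fun x ↦ x + h x) s ∧ IsOpen ((fun x ↦ x + h x) '' s) := by
  have hsub : (fun x ↦ x + h x) - ((ContinuousLinearEquiv.refl ℝ E : E →L[ℝ] E) : E → E) = h := by
    ext x
    simp
  have happrox : ApproximatesLinearOn (fun x ↦ x + h x)
      (ContinuousLinearEquiv.refl ℝ E : E →L[ℝ] E) s K := by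
    rwa [ApproximatesLinearOn.approximatesLinearOn_iff_lipschitzOnWith, hsub]
  have hsymm : Subsingleton E ∨
      K < ‖((ContinuousLinearEquiv.refl ℝ E).symm : E →L[ℝ] E)‖₊⁻¹ := by
    refine (subsingleton_or_nontrivial E).imp_right fun (_ : Nontrivial E) ↦ ?_
    have hone : ‖((ContinuousLinearEquiv.refl ℝ E).symm : E →L[ℝ] E)‖₊ = 1 :=
      ContinuousLinearMap.nnnorm_id
    rwa [hone, inv_one]
  exact ⟨happrox.injOn hsymm, (happrox.toOpenPartialHomeomorph _ s hsymm hs).open_target⟩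

theorem eventually_forall_det_one_add_smul_pos {X : Type*} [TopologicalSpace X] {K : Set X}
    (hK : IsCompact K) {A : X → E →L[ℝ] E} (hA : Continuous A) :
    ∀ᶠ t : ℝ in 𝓝 0, ∀ x ∈ K, 0 < (1 + t • A x).det := by
  refine hK.eventually_forall_of_forall_eventually (P := fun (t : ℝ) x ↦ 0 < (1 + t • A x).det)
    fun x _ ↦ ?_
  have hcont : Continuous fun q : ℝ × X ↦ (1 + q.1 • A q.2).det :=
    ContinuousLinearMap.continuous_det.comp (by fun_prop)
  exact hcont.continuousAt.eventually_const_lt (by simp [ContinuousLinearMap.det])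

variable [FiniteDimensional ℝ E] [MeasurableSpace E] [BorelSpace E] (μ : Measure E)
  [μ.IsAddHaarMeasure]

theorem integral_det_fderiv_eq_measureReal_image {F : E → E} {F' : E → E →L[ℝ] E} {s : Set E}
    (hs : MeasurableSet s) (hF : ∀ x ∈ s, HasFDerivWithinAt F (F' x) s x) (hinj : InjOn F s)
    (hpos : ∀ x ∈ s, 0 ≤ (F' x).det) : ∫ x in s, (F' x).det ∂μ = μ.real (F '' s) := by
  have hvol := integral_image_eq_integral_abs_det_fderiv_smul μ hs hF hinj fun _ ↦ (1 : ℝ)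
  rw [setIntegral_const, smul_eq_mul, mul_one] at hvol
  rw [hvol]
  exact setIntegral_congr_fun hs fun x hx ↦ by simp [abs_of_nonneg (hpos x hx)]

variable {f : E → E} {U : Set E}

theorem eventually_integral_det_one_add_smul_fderiv_sub (hf : ContDiff ℝ 1 f) (hUo : IsOpen U)
    (hUc : Convex ℝ U) (hUb : Bornology.IsBounded U) (hmaps : MapsTo f U (closure U))
    (hid : EqOn f id (frontier U)) :
    ∀ᶠ t : ℝ in 𝓝[>] 0, ∫ x in U, (1 + t • (fderiv ℝ f x - 1)).det ∂μ = μ.real U := by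
  have := FiniteDimensional.proper ℝ E
  have hcpt : IsCompact (closure U) := hUb.isCompact_closure
  obtain ⟨K, hK⟩ : ∃ K, LipschitzOnWith K (fun x ↦ f x - x) U :=
    ((hf.sub contDiff_id).locallyLipschitz.locallyLipschitzOn).exists_lipschitzOnWith_of_compact
      hcpt |>.imp fun K hK ↦ hK.mono subset_closure
  have hsmall : ∀ᶠ t : ℝ in 𝓝 0, ‖t‖₊ * K < 1 :=
    Continuous.tendsto' (by fun_prop) 0 0 (by simp) |>.eventually_lt_const one_pos
  have hdet := eventually_forall_det_one_add_smul_pos hcpt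
    ((hf.continuous_fderiv one_ne_zero).sub (continuous_const (y := (1 : E →L[ℝ] E))))
  filter_upwards [nhdsWithin_le_nhds hsmall, nhdsWithin_le_nhds hdet,
    Ioo_mem_nhdsGT one_pos] with t htK htdet ⟨ht0, ht1⟩
  let F : E → E := fun x ↦ x + t • (f x - x)
  obtain ⟨hinj, hopen⟩ : InjOn F U ∧ IsOpen (F '' U) :=
    injOn_and_isOpen_image_id_add_of_lipschitzOnWith
      ((lipschitzWith_smul t).comp_lipschitzOnWith hK) htK hUo
  have hFmaps : MapsTo F U U := fun x hx ↦ by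
    have := hUc.combo_interior_closure_mem_interior (hUo.interior_eq.symm ▸ hx) (hmaps hx)
      (sub_pos.2 ht1) ht0.le (sub_add_cancel 1 t)
    rw [hUo.interior_eq] at this
    convert this using 1
    simp only [F]
    module
  have hFfr : MapsTo F (frontier U) Uᶜ := fun x hx ↦ by
    simpa [F, hid hx] using (hUo.frontier_eq ▸ hx).2
  have himage : F '' U = U := image_eq_self_of_isOpen_image hUc.isPreconnected hcpt
    (by have := hf.continuous; fun_prop) hopen hFmaps hFfr
  have hderiv (x : E) : HasFDerivAt F (1 + t • (fderiv ℝ f x - 1)) x :=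
    (hasFDerivAt_id x).add <|
      ((hf.differentiable one_ne_zero x).hasFDerivAt.sub (hasFDerivAt_id x)).const_smul t
  rw [integral_det_fderiv_eq_measureReal_image μ hUo.measurableSet
    (fun x _ ↦ (hderiv x).hasFDerivWithinAt) hinj
    fun x hx ↦ (htdet x (subset_closure hx)).le, himage]

theorem integral_det_fderiv_eq_measureReal (hf : ContDiff ℝ 1 f) (hUo : IsOpen U)
    (hUc : Convex ℝ U) (hUb : Bornology.IsBounded U) (hmaps : MapsTo f U (closure U))
    (hid : EqOn f id (frontier U)) : ∫ x in U, (fderiv ℝ f x).det ∂μ = μ.real U := by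
  have := FiniteDimensional.proper ℝ E
  choose p hdeg heval using fun x ↦
    exists_polynomial_eval_eq_det_add_smul (fderiv ℝ f x - 1 : E →L[ℝ] E).toLinearMap 1
  replace heval (x : E) (t : ℝ) : (p x).eval t = (1 + t • (fderiv ℝ f x - 1)).det := heval x t
  have hint (t : ℝ) : Integrable (fun x ↦ (p x).eval t) (μ.restrict U) := by
    simp_rw [heval]
    have hcont : Continuous fun x ↦ (1 + t • (fderiv ℝ f x - 1)).det :=
      ContinuousLinearMap.continuous_det.comp <| by
        have := hf.continuous_fderiv one_ne_zero
        fun_prop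
    exact (hcont.continuousOn.integrableOn_compact hUb.isCompact_closure).mono_set subset_closure
  obtain ⟨q, hq⟩ := exists_polynomial_eval_eq_integral
    (fun x ↦ (degree_le_of_natDegree_le (hdeg x)).trans_lt (by exact_mod_cast Nat.lt_succ_self _))
    hint
  have hconst : q = C (μ.real U) := by
    refine q.eq_of_infinite_eval_eq _ ?_
    obtain ⟨ε, hε, hsub⟩ := mem_nhdsGT_iff_exists_Ioo_subset.1 <|
      eventually_integral_det_one_add_smul_fderiv_sub μ hf hUo hUc hUb hmaps hid
    refine (Ioo_infinite hε).mono fun t ht ↦ ?_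
    have hvol : ∫ x in U, (1 + t • (fderiv ℝ f x - 1)).det ∂μ = μ.real U := hsub ht
    rw [mem_ofPred_eq, eval_C, ← hq t]
    simpa only [heval] using hvol
  simpa [heval, hconst] using hq 1

end Jacobian

section Degree

theorem det_eq_zero_of_eventually_norm_eq {E : Type*} [NormedAddCommGroup E]
    [InnerProductSpace ℝ E] [FiniteDimensional ℝ E] {f : E → E} {f' : E →L[ℝ] E} {x : E} {c : ℝ}
    (hf : HasFDerivAt f f' x) (hc : c ≠ 0) (hnorm : ∀ᶠ y in 𝓝 x, ‖f y‖ = c) : f'.det = 0 := by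
  by_contra hdet
  obtain ⟨v, hv⟩ : ∃ v, f' v = f x :=
    (LinearMap.equivOfDetNeZero (f' : E →ₗ[ℝ] E) hdet).surjective (f x)
  have hconst : (fun y ↦ ‖f y‖ ^ 2) =ᶠ[𝓝 x] fun _ ↦ c ^ 2 := hnorm.mono fun y hy ↦ by simp [hy]
  have hzero := congr($(hf.norm_sq.unique <|
    (hasFDerivAt_const (c ^ 2) x).congr_of_eventuallyEq hconst) v)
  have hcx : ‖f x‖ = c := hnorm.self_of_nhds
  simp [hv, hcx, hc] at hzero

theorem not_mapsTo_sphere_of_eqOn_id {E : Type*} [NormedAddCommGroup E] [InnerProductSpace ℝ E]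
    [FiniteDimensional ℝ E] {f : E → E} (hf : ContDiff ℝ 1 f) {r : ℝ} (hr : 0 < r)
    (hid : EqOn f id (sphere 0 r)) : ¬ MapsTo f (ball 0 r) (sphere 0 r) := by
  intro hmaps
  borelize E
  have hvol := integral_det_fderiv_eq_measureReal volume hf isOpen_ball (convex_ball 0 r)
    isBounded_ball (hmaps.mono_right <| by
      rw [closure_ball _ hr.ne']; exact sphere_subset_closedBall)
    (by rwa [frontier_ball _ hr.ne'])
  have hzero : EqOn (fun x ↦ (fderiv ℝ f x).det) 0 (ball 0 r) := fun x hx ↦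
    det_eq_zero_of_eventually_norm_eq (hf.differentiable one_ne_zero x).hasFDerivAt hr.ne' <|
      (isOpen_ball.eventually_mem hx).mono fun y hy ↦ by simpa using hmaps hy
  rw [setIntegral_eq_zero_of_forall_eq_zero hzero] at hvol
  exact (ENNReal.toReal_pos (measure_ball_pos volume (0 : E) hr).ne' measure_ball_lt_top.ne).ne hvol

theorem exists_eq_zero_of_eventuallyEq_id {E : Type*} [NormedAddCommGroup E]
    [InnerProductSpace ℝ E] [FiniteDimensional ℝ E] {G : E → E} (hG : Continuous G)
    (hid : G =ᶠ[cocompact E] id) : ∃ x, G x = 0 := by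
  by_contra! hG0
  have := FiniteDimensional.proper ℝ E
  obtain ⟨r, hr, hGr⟩ : ∃ r > 0, ∀ x, r < ‖x‖ → G x = x := by
    rw [← cobounded_eq_cocompact, ← comap_norm_atTop] at hid
    obtain ⟨r, hr0, hr⟩ := (atTop_basis_Ioi' (0 : ℝ)).comap _ |>.eventually_iff.1 hid
    exact ⟨r, hr0, fun x hx ↦ hr hx⟩
  obtain ⟨g, hg, hgG, hgid, -⟩ := hG.exists_contDiff_approx_and_eqOn 1 hG.norm
    (fun x ↦ norm_pos_iff.2 (hG0 x)) (isClosed_le continuous_const continuous_norm)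
    ((isOpen_lt continuous_const continuous_norm).mem_nhdsSet.2 fun x (hx : r + 1 ≤ ‖x‖) ↦
      show r < ‖x‖ by linarith)
    (contDiff_id.contDiffOn.congr fun x hx ↦ hGr x hx)
  have hg0 (x : E) : g x ≠ 0 := fun hx ↦ by simpa [hx] using hgG x
  refine not_mapsTo_sphere_of_eqOn_id (f := fun x ↦ ((r + 1) / ‖g x‖) • g x) (r := r + 1)
    ((contDiff_const.div (hg.norm ℝ hg0) fun x ↦ norm_ne_zero_iff.2 (hg0 x)).smul hg)
    (by positivity) (fun x hx ↦ ?_) fun x _ ↦ ?_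
  · have hx : ‖x‖ = r + 1 := by simpa using hx
    have hgx : g x = x := (hgid hx.ge).trans (hGr x (by linarith))
    simp [hgx, hx, (by positivity : r + 1 ≠ 0)]
  · have := hg0 x
    simp [norm_smul, abs_of_pos (by positivity : 0 < r + 1), this]

variable {E : Type*} [NormedAddCommGroup E] [NormedSpace ℝ E] [FiniteDimensional ℝ E]

theorem surjective_of_eventuallyEq_id {G : E → E} (hG : Continuous G)
    (hid : G =ᶠ[cocompact E] id) : Function.Surjective G := by
  intro y
  let Φ : EuclideanSpace ℝ (Fin (finrank ℝ E)) ≃ₜ E :=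
    toEuclidean.symm.toHomeomorph.trans (Homeomorph.addRight y)
  have hΦid : Φ.symm ∘ G ∘ Φ =ᶠ[cocompact _] id :=
    (Φ.isClosedEmbedding.tendsto_cocompact.eventually hid).mono fun x hx ↦ by
      simp only [Function.comp_apply, hx, id_eq, Φ.symm_apply_apply]
  obtain ⟨x, hx⟩ := exists_eq_zero_of_eventuallyEq_id (by fun_prop) hΦid
  exact ⟨Φ x, by simpa [Φ] using Φ.symm_apply_eq.1 hx⟩

theorem exists_mem_closedBall_eq_self {f : E → E} {c : E} {r : ℝ} (hr : 0 < r)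
    (hf : ContinuousOn f (closedBall c r)) (hmaps : MapsTo f (closedBall c r) (closedBall c r)) :
    ∃ x ∈ closedBall c r, f x = x := by
  have := instTietzeExtensionClosedBall ℝ c hr
  obtain ⟨g, hg⟩ := ContinuousMap.exists_restrict_eq isClosed_closedBall
    ⟨hmaps.restrict, hf.mapsToRestrict hmaps⟩
  let χ : ContDiffBump c := ⟨r, 2 * r, hr, by linarith⟩
  have hχ : (fun x ↦ x - χ x • ((g x : E) - c)) =ᶠ[cocompact E] id :=
    χ.hasCompactSupport.compl_mem_cocompact |> mem_of_superset <| fun x hx ↦ by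
      simp [image_eq_zero_of_notMem_tsupport hx]
  obtain ⟨x, hx⟩ := surjective_of_eventuallyEq_id (by have := χ.continuous; fun_prop) hχ c
  have hxg : x - c = χ x • ((g x : E) - c) := 
    sub_eq_iff_eq_add'.2 (sub_eq_iff_eq_add.1 hx)
  have hxr : x ∈ closedBall c r := by
    rw [mem_closedBall_iff_norm, hxg, norm_smul, Real.norm_of_nonneg χ.nonneg]
    exact (mul_le_of_le_one_left (norm_nonneg _) χ.le_one).trans
      (mem_closedBall_iff_norm.1 (g x).2)
  have hgf : (g x : E) = f x := congr($hg ⟨x, hxr⟩)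
  rw [χ.one_of_mem_closedBall hxr, one_smul, hgf, sub_left_inj] at hxg
  exact ⟨x, hxr, hxg.symm⟩

theorem mem_image_closedBall_of_forall_norm_sub_le {ψ : E → E} {p : E} {r : ℝ} (hr : 0 < r)
    (hψ : ContinuousOn ψ (closedBall p r)) (hle : ∀ x ∈ closedBall p r, ‖ψ x - x‖ ≤ r) :
    p ∈ ψ '' closedBall p r := by
  obtain ⟨x, hx, hfix⟩ := exists_mem_closedBall_eq_self (f := fun x ↦ p - (ψ x - x)) hr
    (by fun_prop) fun x hx ↦ by simpa [mem_closedBall_iff_norm] using hle x hx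
  exact ⟨x, hx, by rw [sub_eq_iff_eq_add, add_sub_cancel] at hfix; exact hfix.symm⟩

theorem eventually_exists_mem_eq_of_continuousAt {T : Type*} [TopologicalSpace T]
    {Ψ : T × E → E} {t₀ : T} {p : E} {U : Set E} (hU : U ∈ 𝓝 p)
    (hΨ : ∀ᶠ q in 𝓝 (t₀, p), ContinuousAt Ψ q) (hid : ∀ᶠ u in 𝓝 p, Ψ (t₀, u) = u) :
    ∀ᶠ t in 𝓝 t₀, ∃ u ∈ U, Ψ (t, u) = p := by
  have := FiniteDimensional.proper ℝ E
  rw [nhds_prod_eq] at hΨ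
  obtain ⟨P, hP, Q, hQ, hPQ⟩ := eventually_prod_iff.1 hΨ
  obtain ⟨r, hr, hball⟩ := nhds_basis_closedBall.eventually_iff.1 ((hQ.and hid).and hU)
  have hclose : ∀ᶠ t in 𝓝 t₀, ∀ u ∈ closedBall p r, ‖Ψ (t, u) - u‖ < r := by
    refine (isCompact_closedBall p r).eventually_forall_of_forall_eventually
      (P := fun t u ↦ ‖Ψ (t, u) - u‖ < r) fun u hu ↦ ?_
    obtain ⟨⟨huQ, huid⟩, -⟩ := hball hu
    have hcont : ContinuousAt (fun q : T × E ↦ ‖Ψ q - q.2‖) (t₀, u) :=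
      ((hPQ hP.self_of_nhds huQ).sub continuousAt_snd).norm
    exact hcont.eventually_lt_const (by simpa [huid] using hr)
  filter_upwards [hP, hclose] with t htP ht
  obtain ⟨u, hu, hup⟩ := mem_image_closedBall_of_forall_norm_sub_le (ψ := fun u ↦ Ψ (t, u)) hr
    (fun u hu ↦ ((hPQ htP (hball hu).1.1).comp (f := fun u ↦ (t, u))
      (by fun_prop)).continuousWithinAt) fun u hu ↦ (ht u hu).le
  exact ⟨u, (hball hu).2, hup⟩

end Degree

section Manifold

variable {E H : Type*} [NormedAddCommGroup E] [NormedSpace ℝ E] [TopologicalSpace H]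
  {I : ModelWithCorners ℝ E H}

theorem isConnected_inter_interior_range {z : E} (hz : z ∈ range I) {r : ℝ} (hr : 0 < r) :
    IsConnected (ball z r ∩ interior (range I)) :=
  ⟨mem_closure_iff.1 (I.range_subset_closure_interior hz) _ isOpen_ball (mem_ball_self hr),
    ((convex_ball z r).inter I.convex_range.interior).isPreconnected⟩

variable [FiniteDimensional ℝ E]

theorem mem_interior_range_of_mem_source {F H' : Type*} [NormedAddCommGroup F] [NormedSpace ℝ F]
    [TopologicalSpace H'] {J : ModelWithCorners ℝ F H'} (τ : OpenPartialHomeomorph H H') {p : H}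
    (hp : p ∈ τ.source) (hpI : I p ∈ interior (range I)) : J (τ p) ∈ interior (range J) := by
  obtain ⟨v, hv⟩ := J.nonempty_interior
  let Φ : ℝ × E → H' := fun q ↦
    J.symm (J (τ (I.symm q.2)) + q.1 • (v - J (τ (I.symm q.2))))
  let Ψ : ℝ × E → E := fun q ↦ I (τ.symm (Φ q))
  have hΦ (q : ℝ × E) (hq : I.symm q.2 ∈ τ.source) : ContinuousAt Φ q := by
    have : ContinuousAt (fun q : ℝ × E ↦ J (τ (I.symm q.2))) q :=
      J.continuous.continuousAt.comp <| (τ.continuousAt hq).comp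
        (f := fun q : ℝ × E ↦ I.symm q.2) (I.continuous_symm.comp continuous_snd).continuousAt
    exact J.continuous_symm.continuousAt.comp <|
      this.add (continuousAt_fst.smul (continuousAt_const.sub this))
  have hsource : ∀ᶠ u in 𝓝 (I p), I.symm u ∈ τ.source :=
    I.continuous_symm.continuousAt.eventually_mem (τ.open_source.mem_nhds (by simpa using hp))
  have hsource' : ∀ᶠ q in 𝓝 ((0 : ℝ), I p), I.symm q.2 ∈ τ.source :=
    hsource.prod_inr_nhds 0
  have hΦ₀ (u : E) : Φ (0, u) = τ (I.symm u) := by simp [Φ]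
  have htarget : ∀ᶠ q in 𝓝 ((0 : ℝ), I p), Φ q ∈ τ.target :=
    (hΦ _ (by simpa using hp)).eventually_mem <| τ.open_target.mem_nhds <| by
      simpa [hΦ₀] using τ.map_source hp
  have hΨ : ∀ᶠ q in 𝓝 ((0 : ℝ), I p), ContinuousAt Ψ q := by
    filter_upwards [hsource', htarget] with q hqs hqt
    exact I.continuous.continuousAt.comp <| (τ.continuousAt_symm hqt).comp (hΦ q hqs)
  have hid : ∀ᶠ u in 𝓝 (I p), Ψ (0, u) = u := by
    filter_upwards [hsource, mem_interior_iff_mem_nhds.1 hpI] with u hus hur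
    simp [Ψ, hΦ₀, τ.left_inv hus, I.right_inv hur]
  rw [nhds_prod_eq] at htarget
  obtain ⟨P, hP, Q, hQ, hPQ⟩ := eventually_prod_iff.1 htarget
  have hsolve : ∀ᶠ t in 𝓝 (0 : ℝ), P t ∧ ∃ u, Q u ∧ Ψ (t, u) = I p :=
    hP.and (eventually_exists_mem_eq_of_continuousAt hQ hΨ hid)
  obtain ⟨t, ⟨htP, u, huQ, hu⟩, ht⟩ :=
    ((hsolve.filter_mono nhdsWithin_le_nhds).and (Ioc_mem_nhdsGT one_pos)).exists
  have hτp : τ p = Φ (t, u) := by rw [← I.injective hu, τ.right_inv (hPQ htP huQ)]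
  have hint := J.convex_range.add_smul_sub_mem_interior (mem_range_self (τ (I.symm u))) hv ht
  rwa [hτp, J.right_inv (interior_subset hint)]

variable {M : Type*} [TopologicalSpace M]

theorem mem_interior_range_iff_of_mem_source {e e' : OpenPartialHomeomorph M H} {y : M}
    (hy : y ∈ e.source) (hy' : y ∈ e'.source) :
    I (e y) ∈ interior (range I) ↔ I (e' y) ∈ interior (range I) := by
  constructor <;> intro h
  · simpa [hy] using mem_interior_range_of_mem_source (J := I) (e.symm.trans e')
      (by simp [hy, hy']) h
  · simpa [hy'] using mem_interior_range_of_mem_source (J := I) (e'.symm.trans e)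
      (by simp [hy, hy']) h

variable [ChartedSpace H M]

theorem image_extChartAt_symm_inter_interior (x : M) {s : Set E}
    (hs : s ∩ range I ⊆ (extChartAt I x).target) :
    (extChartAt I x).symm '' (s ∩ range I) ∩ I.interior M =
      (extChartAt I x).symm '' (s ∩ interior (range I)) := by
  have hiff {z : E} (hz : z ∈ s ∩ range I) :
      (extChartAt I x).symm z ∈ I.interior M ↔ z ∈ interior (range I) := by
    have hsource := (extChartAt I x).map_target (hs hz)
    rw [← (extChartAt I x).right_inv (hs hz), (extChartAt I x).left_inv hsource]
    rw [extChartAt_source] at hsource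
    exact mem_interior_range_iff_of_mem_source (mem_chart_source H _) hsource
  ext y
  constructor
  · rintro ⟨⟨z, hz, rfl⟩, hy⟩
    exact mem_image_of_mem _ ⟨hz.1, (hiff hz).1 hy⟩
  · rintro ⟨z, ⟨hzs, hzi⟩, rfl⟩
    have hz : z ∈ s ∩ range I := ⟨hzs, interior_subset hzi⟩
    exact ⟨mem_image_of_mem _ hz, (hiff hz).2 hzi⟩

end Manifold

theorem stmt6_general {E H : Type*} [NormedAddCommGroup E] [NormedSpace ℝ E]
    [FiniteDimensional ℝ E] [TopologicalSpace H] (I : ModelWithCorners ℝ E H) (M : Type*)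
    [TopologicalSpace M] [ChartedSpace H M] :
    ∀ x : M, ∀ W ∈ 𝓝 x, ∃ V ∈ 𝓝 x, V ⊆ W ∧ IsConnected (V ∩ I.interior M) := by
  intro x W hW
  let φ := extChartAt I x
  have hmap : map φ.symm (𝓝[range I] φ x) = 𝓝 x := map_extChartAt_symm_nhdsWithin_range x
  have hnhds : φ.target ∩ φ.symm ⁻¹' W ∈ 𝓝[range I] φ x :=
    inter_mem (extChartAt_target_mem_nhdsWithin x) (mem_map.1 (hmap.symm ▸ hW))
  obtain ⟨r, hr, hball⟩ := mem_nhdsWithin_iff.1 hnhds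
  have htarget : ball (φ x) r ∩ range I ⊆ φ.target := fun z hz ↦ (hball hz).1
  refine ⟨φ.symm '' (ball (φ x) r ∩ range I), ?_, image_subset_iff.2 fun z hz ↦ (hball hz).2, ?_⟩
  · rw [← hmap]
    exact image_mem_map (inter_mem (mem_nhdsWithin_of_mem_nhds (ball_mem_nhds _ hr))
      self_mem_nhdsWithin)
  · rw [image_extChartAt_symm_inter_interior x htarget]
    exact (isConnected_inter_interior_range (mem_range_self _) hr).image _ <|
      (continuousOn_extChartAt_symm x).mono fun z hz ↦ htarget ⟨hz.1, interior_subset hz.2⟩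

/-- Topological content of Corollary 4.6 of the paper: in a nonempty Hausdorff topological
manifold `M` with boundary, modelled on the `d`-dimensional Euclidean half-space (`d ≥ 1`,
encoded by `[NeZero d]`), every point has arbitrarily small neighborhoods `V` such that the
intersection of `V` with the manifold interior of `M` is nonempty and connected. -/
theorem stmt6 (d : ℕ) [NeZero d] (M : Type*) [TopologicalSpace M] [Nonempty M] [T2Space M]
    [ChartedSpace (EuclideanHalfSpace d) M] :
    ∀ x : M, ∀ W ∈ nhds x, ∃ V ∈ nhds x, V ⊆ W ∧
      IsConnected (V ∩ (modelWithCornersEuclideanHalfSpace d).interior M) :=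
  stmt6_general (𝓡∂ d) M
end
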